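/- For every odd n ≥ 3, W^(1)[g_n] = (n−3) · [8·C(n−4,(n−5)/2) / 2^{n−1}]² + 3 · [2·C(n−3,(n−3)/2) / 2^{n−1}]². -/

import Mathlib

open Finset

namespace BKS

/-- sign function: 1 if z ≥ 0, -1 otherwise. -/
noncomputable def sgn (z : ℝ) : ℝ := if 0 ≤ z then 1 else -1

/-- encode Bool as the ±1 value of a bit. -/
def chi (b : Bool) : ℝ := if b then 1 else -1

/-- Fourier coefficient of f at S. -/
noncomputable def fourierCoeff {n : ℕ} (f : (Fin n → Bool) → ℝ) (S : Finset (Fin n)) : ℝ :=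
  (1 / 2 ^ n : ℝ) * ∑ x : Fin n → Bool, f x * ∏ i ∈ S, chi (x i)

/-- Fourier weight of f at level k: W^(k)[f]. -/
noncomputable def fourierWeight {n : ℕ} (k : ℕ) (f : (Fin n → Bool) → ℝ) : ℝ :=
  ∑ S ∈ Finset.univ.filter (fun S : Finset (Fin n) => S.card = k), (fourierCoeff f S) ^ 2

/-- Noise stability of f at ρ. -/
noncomputable def noiseStab {n : ℕ} (ρ : ℝ) (f : (Fin n → Bool) → ℝ) : ℝ :=
  ∑ k ∈ Finset.range (n + 1), ρ ^ k * fourierWeight k f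

/-- Majority function on n bits. -/
noncomputable def Maj (n : ℕ) : (Fin n → Bool) → ℝ := fun x => sgn (∑ i, chi (x i))

/-- The function g_n(x) = sgn(2(x_1 + ⋯ + x_{n-3}) + x_{n-2} + x_{n-1} + x_n). -/
noncomputable def gfun (n : ℕ) : (Fin n → Bool) → ℝ :=
  fun x => sgn (∑ i : Fin n, (if (i : ℕ) < n - 3 then (2 : ℝ) else 1) * chi (x i))

/-- f is a linear threshold function. -/
def IsLTF {n : ℕ} (f : (Fin n → Bool) → ℝ) : Prop :=
  ∃ (w0 : ℝ) (w : Fin n → ℝ), ∀ x, f x = sgn (w0 + ∑ i, w i * chi (x i))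

/-!
A linear threshold function with nonnegative weight `w i` is monotone in `x i`, so pairing each `x`
with its flip at `i` shows that its Fourier coefficient at `{i}` is the proportion of points `x` at
which `i` is pivotal, that is, at which the rest of the linear form lies in `[-w i, w i)`.

For `gfun n` the rest of the form is `4 t + 2 s` minus a constant, where `t` and `s` count the true
bits other than `x i` among the coordinates of weight `2` and among the three of weight `1`. If `i`
has weight `1`, parity leaves only the balanced case `t = (n - 3) / 2`, `s = 1`. If `i` has weight
`2`, it leaves the two most balanced values of `t`, each with half of the eight patterns of the last
three bits.
-/

theorem sgn_of_nonneg {z : ℝ} (h : 0 ≤ z) : sgn z = 1 := if_pos h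

theorem sgn_of_neg {z : ℝ} (h : z < 0) : sgn z = -1 := if_neg h.not_ge

theorem chi_not (b : Bool) : chi (!b) = -chi b := by
  cases b <;> simp [chi]

theorem sgn_add_sub_sgn_sub {s w : ℝ} (hw : 0 ≤ w) :
    sgn (s + w) - sgn (s - w) = if s ∈ Set.Ico (-w) w then 2 else 0 := by
  rcases lt_or_ge s (-w) with hlt | hge
  · rw [sgn_of_neg (by linarith), sgn_of_neg (by linarith), if_neg fun h => h.1.not_gt hlt,
      sub_self]
  rcases lt_or_ge s w with hlt | hge'
  · rw [sgn_of_nonneg (by linarith), sgn_of_neg (by linarith), if_pos ⟨hge, hlt⟩]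
    norm_num
  · rw [sgn_of_nonneg (by linarith), sgn_of_nonneg (by linarith),
      if_neg fun h => h.2.not_ge hge', sub_self]

theorem chi_mul_sgn_add_sub_sgn_sub {s w : ℝ} (hw : 0 ≤ w) (b : Bool) :
    chi b * (sgn (s + w * chi b) - sgn (s - w * chi b)) =
      if s ∈ Set.Ico (-w) w then 2 else 0 := by
  rw [← sgn_add_sub_sgn_sub hw]
  cases b
  · simp [chi, ← sub_eq_add_neg]
  · simp [chi]

section Flip

variable {ι : Type*} [DecidableEq ι]

/-- The point `x` of the cube with its `i`-th bit flipped. -/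
def flipBit (i : ι) (x : ι → Bool) : ι → Bool := Function.update x i (!x i)

theorem flipBit_apply_self (i : ι) (x : ι → Bool) : flipBit i x i = !x i :=
  Function.update_self ..

theorem flipBit_apply_of_ne {i j : ι} (h : j ≠ i) (x : ι → Bool) : flipBit i x j = x j :=
  Function.update_of_ne h ..

theorem flipBit_involutive (i : ι) : Function.Involutive (flipBit i) := fun x => by
  simp [flipBit]

variable [Fintype ι]

theorem two_mul_sum_mul_chi (f : (ι → Bool) → ℝ) (i : ι) :
    2 * ∑ x, f x * chi (x i) = ∑ x, chi (x i) * (f x - f (flipBit i x)) := by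
  have sum_flip : ∑ x, f (flipBit i x) * chi (flipBit i x i) = ∑ x, f x * chi (x i) :=
    Equiv.sum_comp (flipBit_involutive i).toPerm fun x => f x * chi (x i)
  rw [two_mul]
  nth_rw 2 [← sum_flip]
  rw [← sum_add_distrib]
  refine sum_congr rfl fun x _ => ?_
  rw [flipBit_apply_self, chi_not]
  ring

theorem sum_mul_chi_flipBit (w : ι → ℝ) (i : ι) (x : ι → Bool) :
    ∑ j, w j * chi (flipBit i x j) = ∑ j ∈ univ.erase i, w j * chi (x j) - w i * chi (x i) := by
  rw [← sum_erase_add _ _ (mem_univ i), flipBit_apply_self, chi_not, mul_neg, ← sub_eq_add_neg]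
  congr 1
  exact sum_congr rfl fun j hj => by rw [flipBit_apply_of_ne (ne_of_mem_erase hj)]

end Flip

theorem fourierCoeff_singleton_eq_card_pivotal_div {n : ℕ} {f : (Fin n → Bool) → ℝ} {w₀ : ℝ}
    {w : Fin n → ℝ} (hf : ∀ x, f x = sgn (w₀ + ∑ j, w j * chi (x j))) {i : Fin n}
    (hi : 0 ≤ w i) :
    fourierCoeff f {i} =
      #{x : Fin n → Bool | w₀ + ∑ j ∈ univ.erase i, w j * chi (x j) ∈ Set.Ico (-w i) (w i)} /
        2 ^ n := by
  have pivotal (x : Fin n → Bool) : chi (x i) * (f x - f (flipBit i x)) =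
      if w₀ + ∑ j ∈ univ.erase i, w j * chi (x j) ∈ Set.Ico (-w i) (w i) then 2 else 0 := by
    rw [hf, hf, sum_mul_chi_flipBit, ← sum_erase_add _ _ (mem_univ i), ← add_assoc,
      ← add_sub_assoc, chi_mul_sgn_add_sub_sgn_sub hi]
  have two_mul_sum := two_mul_sum_mul_chi f i
  simp only [pivotal, ← sum_filter, sum_const, nsmul_eq_mul] at two_mul_sum
  rw [fourierCoeff, one_div_mul_eq_div]
  simp only [prod_singleton]
  congr 1
  linarith

theorem fourierWeight_one {n : ℕ} (f : (Fin n → Bool) → ℝ) :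
    fourierWeight 1 f = ∑ i, fourierCoeff f {i} ^ 2 := by
  rw [fourierWeight, univ_filter_card_eq, powersetCard_one, sum_map]
  rfl

section TrueCount

variable {ι : Type*}

/-- The number of coordinates in `A` at which `x` is `true`. -/
def trueCount (A : Finset ι) (x : ι → Bool) : ℕ := #{j ∈ A | x j}

theorem trueCount_le_card (A : Finset ι) (x : ι → Bool) : trueCount A x ≤ #A :=
  card_filter_le ..

theorem sum_chi_eq_trueCount (A : Finset ι) (x : ι → Bool) :
    ∑ j ∈ A, chi (x j) = 2 * trueCount A x - #A := by
  have chi_eq (b : Bool) : chi b = 2 * (if b then 1 else 0) - 1 := by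
    cases b <;> norm_num [chi]
  simp only [chi_eq, sum_sub_distrib, ← mul_sum, sum_boole, sum_const, nsmul_one, trueCount]

variable [Fintype ι] [DecidableEq ι] {A B : Finset ι}

theorem card_trueCount_eq_and_eq (hAB : Disjoint A B) (k l : ℕ) :
    #{x : ι → Bool | trueCount A x = k ∧ trueCount B x = l} =
      (#A).choose k * (#B).choose l * 2 ^ (Fintype.card ι - (#A + #B)) := by
  let restrict (x : ι → Bool) : Finset ι × Finset ι × Finset ι :=
    ({j ∈ A | x j}, {j ∈ B | x j}, {j ∈ (A ∪ B)ᶜ | x j})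
  let glue (p : Finset ι × Finset ι × Finset ι) (j : ι) : Bool := j ∈ p.1 ∪ p.2.1 ∪ p.2.2
  have glue_restrict (x : ι → Bool) : glue (restrict x) = x := by
    ext j
    by_cases hA : j ∈ A <;> by_cases hB : j ∈ B <;> simp [glue, restrict, hA, hB]
  have restrict_glue {S T U : Finset ι} (hS : S ⊆ A) (hT : T ⊆ B) (hU : U ⊆ (A ∪ B)ᶜ) :
      restrict (glue (S, T, U)) = (S, T, U) := by
    simp only [restrict, glue, Prod.mk.injEq]
    refine ⟨?_, ?_, ?_⟩ <;> ext j <;> grind [mem_compl, disjoint_left]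
  have card_eq : #{x : ι → Bool | trueCount A x = k ∧ trueCount B x = l} =
      #(A.powersetCard k ×ˢ B.powersetCard l ×ˢ (A ∪ B)ᶜ.powerset) := by
    refine card_bij' (fun x _ => restrict x) (fun p _ => glue p) ?_ ?_
      (fun x _ => glue_restrict x) ?_
    · intro x hx
      obtain ⟨hA, hB⟩ := (mem_filter.1 hx).2
      exact mem_product.2 ⟨mem_powersetCard.2 ⟨filter_subset .., hA⟩,
        mem_product.2 ⟨mem_powersetCard.2 ⟨filter_subset .., hB⟩,
          mem_powerset.2 (filter_subset ..)⟩⟩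
    · rintro ⟨S, T, U⟩ h
      simp only [mem_product, mem_powersetCard, mem_powerset] at h
      obtain ⟨⟨hS, rfl⟩, ⟨hT, rfl⟩, hU⟩ := h
      have restrict_eq := restrict_glue hS hT hU
      exact mem_filter.2 ⟨mem_univ _, congrArg (card ∘ Prod.fst) restrict_eq,
        congrArg (card ∘ Prod.fst ∘ Prod.snd) restrict_eq⟩
    · rintro ⟨S, T, U⟩ h
      simp only [mem_product, mem_powersetCard, mem_powerset] at h
      exact restrict_glue h.1.1 h.2.1.1 h.2.2
  rw [card_eq, card_product, card_product, card_powersetCard, card_powersetCard, card_powerset,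
    card_compl, card_union_of_disjoint hAB, mul_assoc]

theorem card_trueCount_mem (hAB : Disjoint A B) (K : Finset (ℕ × ℕ)) :
    #{x : ι → Bool | (trueCount A x, trueCount B x) ∈ K} =
      (∑ p ∈ K, (#A).choose p.1 * (#B).choose p.2) * 2 ^ (Fintype.card ι - (#A + #B)) := by
  have mapsTo : Set.MapsTo (fun x => (trueCount A x, trueCount B x))
      ({x : ι → Bool | (trueCount A x, trueCount B x) ∈ K} : Finset (ι → Bool)) K :=
    fun x hx => (mem_filter.1 hx).2
  rw [card_eq_sum_card_fiberwise mapsTo, sum_mul]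
  refine sum_congr rfl fun p hp => ?_
  rw [← card_trueCount_eq_and_eq hAB, filter_filter]
  congr 1
  ext x
  simp only [mem_filter, mem_univ, true_and]
  grind

end TrueCount

section TwoWeights

variable {n : ℕ}

/-- The linear threshold function which gives weight `a` to the coordinates in `A` and weight `b`
to the others. It puts the two kinds of coordinates of `gfun n` on the same footing. -/
noncomputable def twoWeightThreshold (a b : ℕ) (A : Finset (Fin n)) (x : Fin n → Bool) : ℝ :=
  sgn (∑ i, (if i ∈ A then (a : ℝ) else b) * chi (x i))

theorem disjoint_erase_compl_erase (A : Finset (Fin n)) (i : Fin n) :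
    Disjoint (A.erase i) (Aᶜ.erase i) :=
  disjoint_compl_right.mono (erase_subset ..) (erase_subset ..)

theorem card_erase_add_card_compl_erase (A : Finset (Fin n)) (i : Fin n) :
    #(A.erase i) + #(Aᶜ.erase i) = n - 1 := by
  rw [← card_union_of_disjoint (disjoint_erase_compl_erase A i), ← erase_union_distrib,
    union_compl, card_erase_of_mem (mem_univ i), card_univ, Fintype.card_fin]

theorem sum_erase_two_weights_mul_chi (a b : ℝ) (A : Finset (Fin n)) (i : Fin n)
    (x : Fin n → Bool) :
    ∑ j ∈ univ.erase i, (if j ∈ A then a else b) * chi (x j) =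
      a * (2 * trueCount (A.erase i) x - #(A.erase i)) +
        b * (2 * trueCount (Aᶜ.erase i) x - #(Aᶜ.erase i)) := by
  rw [← union_compl A, erase_union_distrib, sum_union (disjoint_erase_compl_erase A i),
    ← sum_chi_eq_trueCount, ← sum_chi_eq_trueCount, mul_sum, mul_sum]
  congr 1
  · exact sum_congr rfl fun j hj => by rw [if_pos (mem_of_mem_erase hj)]
  · exact sum_congr rfl fun j hj => by rw [if_neg (mem_compl.1 (mem_of_mem_erase hj))]

theorem fourierCoeff_twoWeightThreshold_singleton (a b : ℕ) (A : Finset (Fin n)) (i : Fin n)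
    (K : Finset (ℕ × ℕ))
    (hK : ∀ t ≤ #(A.erase i), ∀ s ≤ #(Aᶜ.erase i),
      ((a * (2 * t - #(A.erase i)) + b * (2 * s - #(Aᶜ.erase i)) : ℤ) ∈
        Set.Ico (-(if i ∈ A then (a : ℤ) else b)) (if i ∈ A then (a : ℤ) else b) ↔
          (t, s) ∈ K)) :
    fourierCoeff (twoWeightThreshold a b A) {i} =
      (∑ p ∈ K, (#(A.erase i)).choose p.1 * (#(Aᶜ.erase i)).choose p.2 : ℕ) / 2 ^ (n - 1) := by
  have eq_sgn (x : Fin n → Bool) : twoWeightThreshold a b A x =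
      sgn (0 + ∑ j, (if j ∈ A then (a : ℝ) else b) * chi (x j)) := by
    rw [twoWeightThreshold, zero_add]
  have weight_nonneg : (0 : ℝ) ≤ if i ∈ A then (a : ℝ) else b := by
    split_ifs <;> exact Nat.cast_nonneg _
  have pivotal_iff (x : Fin n → Bool) :
      0 + ∑ j ∈ univ.erase i, (if j ∈ A then (a : ℝ) else b) * chi (x j) ∈
        Set.Ico (-(if i ∈ A then (a : ℝ) else b)) (if i ∈ A then (a : ℝ) else b) ↔
      (trueCount (A.erase i) x, trueCount (Aᶜ.erase i) x) ∈ K := by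
    rw [← hK _ (trueCount_le_card ..) _ (trueCount_le_card ..), zero_add,
      sum_erase_two_weights_mul_chi]
    simp only [Set.mem_Ico]
    split_ifs <;> norm_cast
  have two_pow : (2 : ℝ) ^ n = 2 ^ (n - 1) * 2 := by
    rw [← pow_succ, Nat.sub_add_cancel i.pos]
  rw [fourierCoeff_singleton_eq_card_pivotal_div eq_sgn weight_nonneg]
  simp only [pivotal_iff]
  rw [card_trueCount_mem (disjoint_erase_compl_erase A i), Fintype.card_fin,
    card_erase_add_card_compl_erase, Nat.sub_sub_self i.pos, two_pow, pow_one, Nat.cast_mul,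
    Nat.cast_ofNat, mul_div_mul_right _ _ two_ne_zero]

end TwoWeights

/-- The coordinates of weight `2` in `gfun n`; the remaining ones have weight `1`. -/
def heavy (n : ℕ) : Finset (Fin n) := {i | (i : ℕ) < n - 3}

theorem card_heavy (n : ℕ) : #(heavy n) = n - 3 := by
  rw [heavy, Fin.card_filter_val_lt, min_eq_right (Nat.sub_le n 3)]

theorem card_compl_heavy {n : ℕ} (hn : 3 ≤ n) : #(heavy n)ᶜ = 3 := by
  rw [card_compl, Fintype.card_fin, card_heavy, Nat.sub_sub_self hn]

theorem gfun_eq_twoWeightThreshold (n : ℕ) : gfun n = twoWeightThreshold 2 1 (heavy n) := by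
  funext x
  simp [gfun, twoWeightThreshold, heavy]

theorem fourierCoeff_gfun_of_mem_heavy {n : ℕ} (hn : Odd n) {i : Fin n} (hi : i ∈ heavy n) :
    fourierCoeff (gfun n) {i} = 8 * ((n - 4).choose ((n - 5) / 2) : ℝ) / 2 ^ (n - 1) := by
  obtain ⟨q, rfl⟩ : ∃ q, n = 2 * q + 5 := by
    obtain ⟨r, rfl⟩ := hn
    have lt_sub_three := (mem_filter.1 hi).2
    exact ⟨r - 2, by omega⟩
  have card_heavy_erase : #((heavy (2 * q + 5)).erase i) = 2 * q + 1 := by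
    rw [card_erase_of_mem hi, card_heavy]
    omega
  have card_light_erase : #((heavy (2 * q + 5))ᶜ.erase i) = 3 := by
    rw [erase_eq_of_notMem (notMem_compl.2 hi), card_compl_heavy (by omega)]
  rw [gfun_eq_twoWeightThreshold,
    fourierCoeff_twoWeightThreshold_singleton 2 1 _ i {(q, 2), (q, 3), (q + 1, 0), (q + 1, 1)}]
  · have choose_sum : ∑ p ∈ {(q, 2), (q, 3), (q + 1, 0), (q + 1, 1)},
        (2 * q + 1).choose p.1 * Nat.choose 3 p.2 = 8 * (2 * q + 1).choose q := by
      simp [Nat.choose_symm_half]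
      ring
    rw [card_heavy_erase, card_light_erase, choose_sum,
      show 2 * q + 5 - 4 = 2 * q + 1 by omega, show (2 * q + 5 - 5) / 2 = q by omega,
      Nat.cast_mul, Nat.cast_ofNat]
  · intro t _ s hs
    simp only [card_heavy_erase, card_light_erase, if_pos hi, Set.mem_Ico, mem_insert,
      mem_singleton, Prod.mk.injEq] at hs ⊢
    omega

theorem fourierCoeff_gfun_of_notMem_heavy {n : ℕ} (hn : Odd n) (h3 : 3 ≤ n) {i : Fin n}
    (hi : i ∉ heavy n) :
    fourierCoeff (gfun n) {i} = 2 * ((n - 3).choose ((n - 3) / 2) : ℝ) / 2 ^ (n - 1) := by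
  obtain ⟨k, hk⟩ : ∃ k, n - 3 = 2 * k :=
    even_iff_exists_two_mul.1 (Nat.Odd.sub_odd hn (by decide : Odd 3))
  have card_heavy_erase : #((heavy n).erase i) = 2 * k := by
    rw [erase_eq_of_notMem hi, card_heavy, hk]
  have card_light_erase : #((heavy n)ᶜ.erase i) = 2 := by
    rw [card_erase_of_mem (mem_compl.2 hi), card_compl_heavy h3]
  rw [gfun_eq_twoWeightThreshold, fourierCoeff_twoWeightThreshold_singleton 2 1 _ i {(k, 1)}]
  · rw [card_heavy_erase, card_light_erase, sum_singleton, Nat.choose_one_right, hk,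
      Nat.mul_div_cancel_left k two_pos, Nat.cast_mul, Nat.cast_ofNat, mul_comm (2 : ℝ)]
  · intro t _ s hs
    simp only [card_heavy_erase, card_light_erase, if_neg hi, Set.mem_Ico, mem_singleton,
      Prod.mk.injEq] at hs ⊢
    omega

theorem stmt4 (n : ℕ) (hn : Odd n) (h3 : 3 ≤ n) :
    fourierWeight 1 (gfun n) =
      ((n : ℝ) - 3) * (8 * ((n - 4).choose ((n - 5) / 2) : ℝ) / 2 ^ (n - 1)) ^ 2 +
      3 * (2 * ((n - 3).choose ((n - 3) / 2) : ℝ) / 2 ^ (n - 1)) ^ 2 := by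
  rw [fourierWeight_one, ← sum_add_sum_compl (heavy n)]
  congr 1
  · rw [sum_congr rfl fun i hi => by rw [fourierCoeff_gfun_of_mem_heavy hn hi], sum_const,
      nsmul_eq_mul, card_heavy, Nat.cast_sub h3, Nat.cast_ofNat]
  · rw [sum_congr rfl fun i hi => by
      rw [fourierCoeff_gfun_of_notMem_heavy hn h3 (mem_compl.1 hi)], sum_const, nsmul_eq_mul,
      card_compl_heavy h3, Nat.cast_ofNat]

end BKS
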